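/- The sum of the absolute values of the eigenvalues of the block matrix M = [[J_c, J_{c×k}], [J_{k×c}, 0_k]] equals √(c² + 4ck). -/

import Mathlib

open Polynomial Matrix

/-- The block matrix `M = [[J_c, J_{c×k}], [J_{k×c}, 0_k]]`. -/
noncomputable def shadowM (c k : ℕ) : Matrix (Fin c ⊕ Fin k) (Fin c ⊕ Fin k) ℝ :=
  Matrix.fromBlocks (Matrix.of fun _ _ => 1) (Matrix.of fun _ _ => 1)
    (Matrix.of fun _ _ => 1) 0

/-- The energy of a real matrix: the sum of the absolute values of its eigenvalues
(the roots of its characteristic polynomial) counted with multiplicity. -/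
noncomputable def energy {n : Type*} [Fintype n] [DecidableEq n] (M : Matrix n n ℝ) : ℝ :=
  (M.charpoly.roots.map fun x => |x|).sum

/- The matrix of the theorem pulls back `!![1, 1; 1, 0]` along the map collapsing each block of
indices to a point. A pullback along `f` factors through the index type of the small matrix, and
swapping the two factors changes the characteristic polynomial only by a power of `X`. So it has
the same energy as the `2 × 2` quotient matrix `!![c, k; c, 0]`, whose determinant is nonpositive:
its eigenvalues have opposite signs, and the energy is their difference, the square root of the
discriminant of the characteristic polynomial. -/

lemma sum_map_roots_X_pow_mul {R A : Type*} [CommRing R] [IsDomain R] [AddCommMonoid A] {g : R → A}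
    (hg : g 0 = 0) (n : ℕ) {p : R[X]} (hp : p ≠ 0) :
    ((X ^ n * p).roots.map g).sum = (p.roots.map g).sum := by
  rw [roots_mul (mul_ne_zero (pow_ne_zero n X_ne_zero) hp), roots_X_pow]
  simp [Multiset.map_nsmul, Multiset.sum_nsmul, hg]

section

variable {ι κ R : Type*} [Fintype ι] [Fintype κ] [DecidableEq κ]

lemma energy_mul_comm [DecidableEq ι] (A : Matrix ι κ ℝ) (B : Matrix κ ι ℝ) :
    energy (A * B) = energy (B * A) := by
  rw [energy, ← sum_map_roots_X_pow_mul abs_zero (Fintype.card κ) (charpoly_monic _).ne_zero,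
    charpoly_mul_comm', sum_map_roots_X_pow_mul abs_zero _ (charpoly_monic _).ne_zero, energy]

lemma submatrix_mul_one_submatrix [NonAssocSemiring R] {l : Type*} (Q : Matrix l κ R) (f : ι → κ) :
    Q.submatrix id f * (1 : Matrix κ κ R).submatrix f id =
      Q * diagonal fun j => (Finset.card {i | f i = j} : R) := by
  ext i j
  calc ∑ x, Q i (f x) * (1 : Matrix κ κ R) (f x) j
      = ∑ x, if f x = j then Q i j else 0 := by
        refine Finset.sum_congr rfl fun x _ => ?_
        split_ifs with h <;> simp [one_apply, h]
    _ = Q i j * (Finset.card {x | f x = j} : R) := by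
        rw [← Finset.sum_filter, Finset.sum_const, nsmul_eq_mul, (Nat.cast_commute _ _).eq]
    _ = _ := by rw [mul_diagonal]

theorem energy_submatrix [DecidableEq ι] (Q : Matrix κ κ ℝ) (f : ι → κ) :
    energy (Q.submatrix f f) =
      energy (Q * diagonal fun j => (Finset.card {i | f i = j} : ℝ)) := by
  have hfactor : Q.submatrix f f = (1 : Matrix κ κ ℝ).submatrix f id * Q.submatrix id f := by
    rw [← submatrix_mul _ _ _ _ _ Function.bijective_id, one_mul]
  rw [hfactor, energy_mul_comm, submatrix_mul_one_submatrix]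

end

lemma charpoly_roots_fin_two {K : Type*} [Field K] [NeZero (2 : K)] {M : Matrix (Fin 2) (Fin 2) K}
    {s : K} (hs : s ^ 2 = M.discr) :
    M.charpoly.roots = {(M.trace + s) / 2, (M.trace - s) / 2} := by
  have hcharpoly : M.charpoly = C 1 * X ^ 2 + C (-M.trace) * X + C M.det := by
    rw [charpoly_fin_two, C_1, C_neg]
    ring
  rw [discr_fin_two] at hs
  rw [hcharpoly, roots_quadratic_eq_pair_iff_of_ne_zero one_ne_zero]
  constructor
  · field_simp
    ring
  · field_simp
    linear_combination hs

theorem energy_fin_two_of_det_nonpos {M : Matrix (Fin 2) (Fin 2) ℝ} (hdet : M.det ≤ 0) :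
    energy M = √M.discr := by
  set s := √M.discr
  have htrace : M.trace ^ 2 ≤ M.discr := by
    rw [discr_fin_two]
    linarith
  have hs : s ^ 2 = M.discr := Real.sq_sqrt ((sq_nonneg _).trans htrace)
  obtain ⟨hneg, hpos⟩ : -s ≤ M.trace ∧ M.trace ≤ s := abs_le.mp (Real.abs_le_sqrt htrace)
  calc energy M = |(M.trace + s) / 2| + |(M.trace - s) / 2| := by
        simp [energy, charpoly_roots_fin_two hs]
    _ = (M.trace + s) / 2 + -((M.trace - s) / 2) := by
        rw [abs_of_nonneg (by linarith), abs_of_nonpos (by linarith)]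
    _ = s := by ring

/-- The block containing an index of a `2 × 2` block matrix, as an index into the matrix of
blocks. -/
def blockIndex {α β : Type*} : α ⊕ β → Fin 2 :=
  Sum.elim (fun _ => 0) fun _ => 1

lemma card_filter_blockIndex_eq {α β : Type*} [Fintype α] [Fintype β] (j : Fin 2) :
    Finset.card {i : α ⊕ β | blockIndex i = j} = ![Fintype.card α, Fintype.card β] j := by
  rw [Finset.card_filter, Fintype.sum_sum_type]
  fin_cases j <;> simp [blockIndex]

lemma shadowM_eq_submatrix (c k : ℕ) :
    shadowM c k = !![1, 1; 1, 0].submatrix blockIndex blockIndex := by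
  ext (i | i) (j | j) <;> simp [shadowM, blockIndex]

theorem energy_shadowM (c k : ℕ) (hc : 1 ≤ c) (hk : 1 ≤ k) :
    energy (shadowM c k) = Real.sqrt ((c : ℝ) ^ 2 + 4 * c * k) := by
  have hquotient : energy (shadowM c k) = energy !![(c : ℝ), (k : ℝ); (c : ℝ), 0] := by
    rw [shadowM_eq_submatrix, energy_submatrix]
    congr 1
    ext i j
    rw [mul_diagonal, card_filter_blockIndex_eq]
    fin_cases i <;> fin_cases j <;> simp
  have hdet : (!![(c : ℝ), (k : ℝ); (c : ℝ), 0]).det ≤ 0 := by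
    rw [det_fin_two_of, mul_zero, zero_sub, neg_nonpos]
    positivity
  have hdiscr : (!![(c : ℝ), (k : ℝ); (c : ℝ), 0]).discr = (c : ℝ) ^ 2 + 4 * c * k := by
    rw [discr_fin_two, trace_fin_two_of, det_fin_two_of]
    ring
  rw [hquotient, energy_fin_two_of_det_nonpos hdet, hdiscr]
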